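/- arXiv:2410.15020 — 2 statements merged into one kernel-verified Lean document; each statement's English description precedes it below -/
import Mathlib

section
/- Convergence of the standard Chebyshev method: Let W be a real symmetric matrix whose eigenvalues all lie in [-1,1], let α ∈ (0,1), α̃ = (1-√α)/(1+√α), and let δ_t be the sequence δ_1 = (1-α)/(1+α), δ_{t+1} = (2(1+α)/(1-α) - δ_t)^{-1}. Suppose the vectors r^{(t)} satisfy r^{(1)} = δ_1 W r^{(0)} and r^{(t+1)} = 2 δ_{t+1} W r^{(t)} - δ_t δ_{t+1} r^{(t-1)} for all t ≥ 1. Then for every t ≥ 1, ‖r^{(t)}‖_2 ≤ (∏_{j=1}^{t} δ_j) · ‖r^{(0)}‖_2 ≤ 2 α̃^t · ‖r^{(0)}‖_2. -/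
/-!
Put `P t = ∏ j ∈ Icc 1 t, δ j` and let `T t`, `U t` be the Chebyshev polynomials of the first and
second kind. The recurrence for `r` is the three-term recurrence of `T t` rescaled, so that
`r t = P t • T t (W) (r 0)`.

*First inequality.* It suffices that `T t (W)` is a contraction. The Pell identity
`T t ^ 2 + (1 - X ^ 2) * U (t - 1) ^ 2 = 1`, applied to the symmetric matrix `W`, says that
`a = T t (W) x` and `b = U (t - 1) (W) x` satisfy `|a|² + (|b|² - |W b|²) = |x|²`, and the bracket
is nonnegative because `W` is a contraction. No spectral theorem is needed: the quadratic form
on the left is invariant under the step `(a, b) ↦ (W a - b + W² b, W b + a)`, which sends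
`(T t, U (t - 1))` to `(T (t + 1), U t)` (`chebyshev_step_energy`).

*Second inequality.* With `ρ = (1 - √α) / (1 + √α)` one has `(1 + α) / (1 - α) = (ρ + ρ⁻¹) / 2`, and
`P t = 1 / T t ((ρ + ρ⁻¹) / 2) = 2 ρ ^ t / (1 + ρ ^ (2 t)) ≤ 2 ρ ^ t`
(`delta_closed_form`, `prod_delta_closed_form`).
-/

open Matrix

/-- Invariance of the Pell quadratic form `|a|² + |b|² - |W b|²` under one Chebyshev step,
for arbitrary vectors `a` and `b`. -/
lemma chebyshev_step_energy {n : ℕ} (W : Matrix (Fin n) (Fin n) ℝ) (hsymm : W.IsSymm)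
    (a b : Fin n → ℝ) :
    (W *ᵥ a - b + W *ᵥ (W *ᵥ b)) ⬝ᵥ (W *ᵥ a - b + W *ᵥ (W *ᵥ b))
      + (W *ᵥ b + a) ⬝ᵥ (W *ᵥ b + a) - (W *ᵥ (W *ᵥ b + a)) ⬝ᵥ (W *ᵥ (W *ᵥ b + a))
    = a ⬝ᵥ a + b ⬝ᵥ b - (W *ᵥ b) ⬝ᵥ (W *ᵥ b) := by
  have hs : ∀ x y : Fin n → ℝ, x ⬝ᵥ (W *ᵥ y) = (W *ᵥ x) ⬝ᵥ y := by
    intro x y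
    rw [dotProduct_mulVec, ← mulVec_transpose, hsymm.eq]
  have h1 := hs b (W *ᵥ b)
  have h2 := hs a b
  have h3 := dotProduct_comm (W *ᵥ a) (W *ᵥ (W *ᵥ b))
  have h4 := dotProduct_comm (W *ᵥ a) b
  have h5 := dotProduct_comm (W *ᵥ b) a
  have h6 := dotProduct_comm (W *ᵥ (W *ᵥ b)) b
  simp only [mulVec_add, add_dotProduct, sub_dotProduct, dotProduct_add, dotProduct_sub]
  linarith

/-- The iterate `r t` is `P t` times the first component `a` of a Chebyshev pair `(a, b)`
whose Pell form equals `|r 0|²`; the next iterate is given by the next pair. -/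
lemma exists_chebyshev_pair {n : ℕ} (W : Matrix (Fin n) (Fin n) ℝ) (hsymm : W.IsSymm)
    (δ : ℕ → ℝ) (r : ℕ → Fin n → ℝ)
    (hr1 : r 1 = δ 1 • W *ᵥ (r 0))
    (hrrec : ∀ t, 1 ≤ t →
      r (t + 1) = (2 * δ (t + 1)) • W *ᵥ (r t) - (δ t * δ (t + 1)) • r (t - 1)) (t : ℕ) :
    ∃ a b : Fin n → ℝ,
      r t = (∏ j ∈ Finset.Icc 1 t, δ j) • a ∧
      r (t + 1) = (∏ j ∈ Finset.Icc 1 (t + 1), δ j) • (W *ᵥ a - b + W *ᵥ (W *ᵥ b)) ∧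
      a ⬝ᵥ a + b ⬝ᵥ b - (W *ᵥ b) ⬝ᵥ (W *ᵥ b) = r 0 ⬝ᵥ r 0 := by
  induction t with
  | zero => exact ⟨r 0, 0, by simp, by simpa using hr1, by simp⟩
  | succ t ih =>
    obtain ⟨a, b, h0, h1, he⟩ := ih
    refine ⟨W *ᵥ a - b + W *ᵥ (W *ᵥ b), W *ᵥ b + a, h1, ?_,
      (chebyshev_step_energy W hsymm a b).trans he⟩
    rw [hrrec (t + 1) (by omega), h1, Nat.add_sub_cancel, h0,
      Finset.prod_Icc_succ_top (show 1 ≤ t + 1 + 1 by omega),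
      Finset.prod_Icc_succ_top (show 1 ≤ t + 1 by omega)]
    simp only [mulVec_add, mulVec_sub, mulVec_smul]
    module

/-- `δ t = T (t - 1) (c) / T t (c)` where `c = (ρ + ρ⁻¹) / 2`, written in terms of `ρ`. -/
lemma delta_closed_form (ρ : ℝ) (hρ : 0 < ρ) (δ : ℕ → ℝ) (c : ℝ)
    (hc : 2 * c = (1 + ρ ^ 2) / ρ) (hδ1 : δ 1 = c⁻¹)
    (hδrec : ∀ t, 1 ≤ t → δ (t + 1) = (2 * c - δ t)⁻¹) (t : ℕ) :
    δ (t + 1) = ρ * (1 + ρ ^ (2 * t)) / (1 + ρ ^ (2 * (t + 1))) := by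
  induction t with
  | zero =>
    have : c = (1 + ρ ^ 2) / (2 * ρ) := by
      field_simp at hc ⊢
      linarith
    rw [hδ1, this]
    field_simp
    norm_num
  | succ t ih =>
    have h : 2 * c - δ (t + 1) = (1 + ρ ^ (2 * (t + 1 + 1))) / (ρ * (1 + ρ ^ (2 * (t + 1)))) := by
      rw [ih, hc]
      field_simp
      ring
    rw [hδrec (t + 1) (by omega), h, inv_div]

lemma prod_delta_closed_form (ρ : ℝ) (hρ : 0 < ρ) (δ : ℕ → ℝ)
    (hδ : ∀ t, δ (t + 1) = ρ * (1 + ρ ^ (2 * t)) / (1 + ρ ^ (2 * (t + 1)))) (t : ℕ) :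
    ∏ j ∈ Finset.Icc 1 t, δ j = 2 * ρ ^ t / (1 + ρ ^ (2 * t)) := by
  induction t with
  | zero => norm_num
  | succ t ih =>
    rw [Finset.prod_Icc_succ_top (by omega), ih, hδ]
    field_simp
    ring

/-- Convergence of the standard Chebyshev method. -/
theorem standard_chebyshev_convergence
    {n : ℕ} (W : Matrix (Fin n) (Fin n) ℝ) (hsymm : W.IsSymm)
    (hW : ∀ x : Fin n → ℝ, (∑ i, (W.mulVec x i) ^ 2) ≤ ∑ i, (x i) ^ 2)
    (α : ℝ) (hα0 : 0 < α) (hα1 : α < 1)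
    (atil : ℝ) (hatil : atil = (1 - Real.sqrt α) / (1 + Real.sqrt α))
    (δ : ℕ → ℝ) (hδ1 : δ 1 = (1 - α) / (1 + α))
    (hδrec : ∀ t, 1 ≤ t → δ (t + 1) = (2 * (1 + α) / (1 - α) - δ t)⁻¹)
    (r : ℕ → Fin n → ℝ)
    (hr1 : r 1 = δ 1 • W.mulVec (r 0))
    (hrrec : ∀ t, 1 ≤ t →
      r (t + 1) = (2 * δ (t + 1)) • W.mulVec (r t) - (δ t * δ (t + 1)) • r (t - 1)) :
    ∀ t, 1 ≤ t →
      Real.sqrt (∑ i, (r t i) ^ 2) ≤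
        (∏ j ∈ Finset.Icc 1 t, δ j) * Real.sqrt (∑ i, (r 0 i) ^ 2) ∧
      (∏ j ∈ Finset.Icc 1 t, δ j) * Real.sqrt (∑ i, (r 0 i) ^ 2) ≤
        2 * atil ^ t * Real.sqrt (∑ i, (r 0 i) ^ 2) := by
  intro t ht
  have hs0 : 0 < √α := Real.sqrt_pos.2 hα0
  have hs1 : √α < 1 := by rw [Real.sqrt_lt' one_pos]; simpa using hα1
  have hsq : √α ^ 2 = α := Real.sq_sqrt hα0.le
  have hρ : 0 < atil := by
    rw [hatil]
    exact div_pos (by linarith) (by linarith)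
  have hc : 2 * ((1 + α) / (1 - α)) = (1 + atil ^ 2) / atil := by
    have h1 : 1 - √α ≠ 0 := by linarith
    have h2 : 1 + √α ≠ 0 := by linarith
    have h3 : 1 - α = (1 - √α) * (1 + √α) := by linear_combination hsq
    have h4 : 1 + α = 1 + √α ^ 2 := by rw [hsq]
    rw [hatil, h3, h4]
    field_simp
    ring
  have hδ := delta_closed_form atil hρ δ _ hc (by rw [hδ1, inv_div])
    (fun t ht => by rw [hδrec t ht, mul_div_assoc])
  have hP := prod_delta_closed_form atil hρ δ hδ t
  have hP0 : 0 ≤ ∏ j ∈ Finset.Icc 1 t, δ j := by rw [hP]; positivity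
  constructor
  · obtain ⟨a, b, hra, -, he⟩ := exists_chebyshev_pair W hsymm δ r hr1 hrrec t
    have hb := hW b
    have ha : ∑ i, a i ^ 2 ≤ ∑ i, r 0 i ^ 2 := by
      simp only [dotProduct, ← pow_two] at he
      linarith
    have hsum : ∑ i, r t i ^ 2 = (∏ j ∈ Finset.Icc 1 t, δ j) ^ 2 * ∑ i, a i ^ 2 := by
      rw [hra, Finset.mul_sum]
      simp only [Pi.smul_apply, smul_eq_mul, mul_pow]
    rw [hsum, Real.sqrt_mul (sq_nonneg _), Real.sqrt_sq hP0]
    exact mul_le_mul_of_nonneg_left (Real.sqrt_le_sqrt ha) hP0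
  · refine mul_le_mul_of_nonneg_right ?_ (Real.sqrt_nonneg _)
    rw [hP]
    exact div_le_self (by positivity) (by linarith [pow_pos hρ (2 * t)])
end

section
/- Momentum expansion for the local Chebyshev method: Let δ_0 = 0, δ_1 = (1-α)/(1+α), δ_{t+1} = (2(1+α)/(1-α) - δ_t)^{-1}, let Q = I - ((1-α)/(1+α)) W, let b be a vector with residuals r^{(t)} = b - Q x^{(t)}, and given subsets S_t ⊆ V with S_0 = supp(r^{(0)}), define x^{(0)} = 0, x^{(1)} = r^{(0)}_{S_0}, and x^{(t+1)} = x^{(t)} + (1 + δ_t δ_{t+1}) r^{(t)}_{S_t} + δ_t δ_{t+1} (x^{(t)} - x^{(t-1)})_{S_t} for t ≥ 1. Then for every t ≥ 1, x^{(t)} - x^{(t-1)} = Σ_{j=0}^{t-1} (1 + δ_j δ_{j+1}) · (∏_{r=j+1}^{t-1} δ_r δ_{r+1}) · r^{(j)}_{S_{j:t-1}}, where S_{j:t-1} = S_j ∩ S_{j+1} ∩ … ∩ S_{t-1} (with the conventions S_{t:t-1} = V and the empty product equal to 1). -/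
/-!
The claim is the unrolled form of a first-order linear recurrence. Write `Δ t = x t - x (t - 1)`.
The update rule says that `Δ (t + 1)` is `(1 + δ t * δ (t + 1))` times `r t` restricted to `S t`,
plus `δ t * δ (t + 1)` times `Δ t` restricted to `S t`. Restricting successively to
`S j, …, S t` is restricting to their intersection, so each step multiplies every older term by one
more factor and intersects its support with one more set, and adds one new term. The recurrence
starts from `Δ 1`, which is `r 0` restricted to `S 0`, with coefficient `1` because `δ 0 = 0`.
-/

/-- Momentum expansion for the local Chebyshev method. -/
theorem locCH_momentum_expansion
    {V : Type*} [Fintype V] [DecidableEq V] [Nonempty V]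
    (A : Matrix V V ℝ) (hsym : A.IsSymm)
    (h01 : ∀ u v, A u v = 0 ∨ A u v = 1)
    (hdiag : ∀ u, A u u = 0)
    (d : V → ℝ) (hd : ∀ u, d u = ∑ v, A u v)
    (hdpos : ∀ u, 0 < d u)
    (α : ℝ) (hα0 : 0 < α) (hα1 : α < 1)
    (W : Matrix V V ℝ)
    (hW : ∀ v w, W v w = A v w / (Real.sqrt (d v) * Real.sqrt (d w)))
    (Q : Matrix V V ℝ) (hQ : Q = 1 - ((1 - α) / (1 + α)) • W)
    (δ : ℕ → ℝ) (hδ0 : δ 0 = 0) (hδ1 : δ 1 = (1 - α) / (1 + α))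
    (hδrec : ∀ t, 1 ≤ t → δ (t + 1) = (2 * (1 + α) / (1 - α) - δ t)⁻¹)
    (b : V → ℝ) (x r : ℕ → V → ℝ)
    (hr : ∀ t, r t = b - Q.mulVec (x t))
    (S : ℕ → Finset V) (hS0 : ∀ v, v ∈ S 0 ↔ r 0 v ≠ 0)
    (hx0 : x 0 = 0)
    (hx1 : x 1 = fun v => if v ∈ S 0 then r 0 v else 0)
    (hxupd : ∀ t, 1 ≤ t → x (t + 1) = x t
        + (1 + δ t * δ (t + 1)) • (fun v => if v ∈ S t then r t v else 0)
        + (δ t * δ (t + 1)) • (fun v => if v ∈ S t then x t v - x (t - 1) v else 0)) :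
    ∀ t, 1 ≤ t →
      x t - x (t - 1) =
        ∑ j ∈ Finset.range t,
          ((1 + δ j * δ (j + 1)) * ∏ i ∈ Finset.Icc (j + 1) (t - 1), δ i * δ (i + 1)) •
            (fun v => if v ∈ (Finset.Icc j (t - 1)).inf S then r j v else 0) := by
  intro t ht
  obtain ⟨n, rfl⟩ : ∃ n, t = n + 1 := ⟨t - 1, by omega⟩
  clear ht
  induction n with
  | zero =>
    funext v
    simp [hx0, hx1, hδ0]
  | succ n ih =>
    have hu := hxupd (n + 1) (by omega)
    funext v
    have ihv := congrFun ih v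
    have huv := congrFun hu v
    simp only [Nat.add_sub_cancel, Pi.sub_apply, Pi.add_apply, Pi.smul_apply, Finset.sum_apply,
      smul_eq_mul] at ihv huv ⊢
    rw [huv, Finset.sum_range_succ, ihv]
    have hlast : (Finset.Icc (n + 1 + 1) (n + 1)) = ∅ := Finset.Icc_eq_empty (by omega)
    rw [hlast, Finset.prod_empty, Finset.Icc_self, Finset.inf_singleton, mul_one]
    have hsum : ∑ j ∈ Finset.range (n + 1),
          ((1 + δ j * δ (j + 1)) * ∏ i ∈ Finset.Icc (j + 1) (n + 1), δ i * δ (i + 1)) *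
            (if v ∈ (Finset.Icc j (n + 1)).inf S then r j v else 0)
        = (δ (n + 1) * δ (n + 1 + 1)) * (if v ∈ S (n + 1) then
            ∑ j ∈ Finset.range (n + 1),
              ((1 + δ j * δ (j + 1)) * ∏ i ∈ Finset.Icc (j + 1) n, δ i * δ (i + 1)) *
                (if v ∈ (Finset.Icc j n).inf S then r j v else 0) else 0) := by
      -- Passing from `n` to `n + 1` extends the product by one factor and intersects with `S (n + 1)`.
      have hterm : ∀ j ∈ Finset.range (n + 1),
          ((1 + δ j * δ (j + 1)) * ∏ i ∈ Finset.Icc (j + 1) (n + 1), δ i * δ (i + 1)) *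
            (if v ∈ (Finset.Icc j (n + 1)).inf S then r j v else 0)
          = (δ (n + 1) * δ (n + 1 + 1)) * (if v ∈ S (n + 1) then
              ((1 + δ j * δ (j + 1)) * ∏ i ∈ Finset.Icc (j + 1) n, δ i * δ (i + 1)) *
                (if v ∈ (Finset.Icc j n).inf S then r j v else 0) else 0) := by
        intro j hj
        have hjn : j ≤ n + 1 := (Finset.mem_range.mp hj).le
        have hIcc : Finset.Icc j (n + 1) = insert (n + 1) (Finset.Icc j n) := by
          ext i
          simp only [Finset.mem_Icc, Finset.mem_insert]
          omega
        rw [Finset.prod_Icc_succ_top (by have := Finset.mem_range.mp hj; omega), hIcc,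
          Finset.inf_insert, Finset.inf_eq_inter]
        by_cases h1 : v ∈ S (n + 1) <;> simp only [Finset.mem_inter, h1, true_and, false_and,
            if_true, if_false] <;>
          ring
      rw [Finset.sum_congr rfl hterm, ← Finset.mul_sum]
      split_ifs <;> simp
    rw [hsum]
    ring
end
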